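/- There exists an 𝔽_2-linear subspace C of 𝔽_2^{101} of dimension 29 such that every nonzero element of C has Hamming weight at least 27. -/

import Mathlib

noncomputable def laneCount (rs : List ℕ) : ℕ → ℕ :=
  List.rec (motive := fun _ => ℕ → ℕ) (fun _ => 1)
    (fun _ _ ih w => Nat.rec (motive := fun _ => ℕ) (ih 0)
      (fun w' _ => Nat.add (ih w) (ih w')) w) rs

noncomputable def slice (j : ℕ) (rs : List ℕ) : ℕ → ℕ :=
  List.rec (motive := fun _ => ℕ → ℕ) (fun _ => 0)
    (fun r rs ih w => Nat.rec (motive := fun _ => ℕ) (ih 0)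
      (fun w' _ => Nat.lor (ih w) (Nat.shiftLeft
        (Nat.xor (ih w') (Nat.mul (Nat.land (Nat.shiftRight r j) 1)
          (Nat.sub (Nat.shiftLeft 1 (laneCount rs w')) 1)))
        (laneCount rs w))) w) rs

noncomputable def tally (rs : List ℕ) (w : ℕ) (n : ℕ) : ℕ → ℕ → ℕ → ℕ → ℕ → ℕ → ℕ :=
  Nat.rec (motive := fun _ => ℕ → ℕ → ℕ → ℕ → ℕ → ℕ → ℕ) (fun _ _ _ _ _ s => s)
    (fun j ih c0 c1 c2 c3 c4 s =>
      (fun b0 => (fun b1 => (fun b2 => (fun b3 => (fun b4 =>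
        ih (Nat.xor c0 b0) (Nat.xor c1 b1) (Nat.xor c2 b2) (Nat.xor c3 b3) (Nat.xor c4 b4)
          (Nat.lor s (Nat.land c4 b4)))
        (Nat.land c3 b3)) (Nat.land c2 b2)) (Nat.land c1 b1)) (Nat.land c0 b0))
      (slice j rs w)) n

noncomputable def allOnes (rs : List ℕ) (w : ℕ) : ℕ := Nat.sub (Nat.shiftLeft 1 (laneCount rs w)) 1

noncomputable def checkCode (rs : List ℕ) (w : ℕ) : Bool :=
  Nat.beq (tally rs w 101 (allOnes rs w) 0 (allOnes rs w) 0 0 1) (allOnes rs w)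

/-- The xor of the rows selected by the Boolean message. -/
def comb : List ℕ → List Bool → ℕ
  | r :: rs, u :: us => (bif u then r else 0) ^^^ comb rs us
  | _, _ => 0

theorem laneCount_pos (rs : List ℕ) : ∀ w, 0 < laneCount rs w := by
  induction rs with
  | nil => intro w; exact Nat.one_pos
  | cons r rs ih =>
    intro w
    cases w with
    | zero => exact ih 0
    | succ w => exact Nat.add_pos_left (ih (w + 1)) _

theorem laneCount_cons_succ (r : ℕ) (rs : List ℕ) (w : ℕ) :
    laneCount (r :: rs) (w + 1) = laneCount rs (w + 1) + laneCount rs w := rfl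

theorem slice_cons_succ (j r : ℕ) (rs : List ℕ) (w : ℕ) :
    slice j (r :: rs) (w + 1) = slice j rs (w + 1) |||
      ((slice j rs w ^^^ (((r >>> j) &&& 1) * ((1 <<< laneCount rs w) - 1)))
        <<< laneCount rs (w + 1)) := rfl

theorem mask_testBit (r j n t : ℕ) (ht : t < n) :
    ((((r >>> j) &&& 1) * ((1 <<< n) - 1)).testBit t) = r.testBit j := by
  have h1 : (1 <<< n) - 1 = 2 ^ n - 1 := by rw [Nat.one_shiftLeft]
  rw [h1]
  have h2 : (r >>> j) &&& 1 = (r.testBit j).toNat := by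
    rw [Nat.and_one_is_mod, Nat.toNat_testBit, Nat.shiftRight_eq_div_pow]
  rw [h2]
  cases r.testBit j
  · simp
  · simp [Nat.testBit_two_pow_sub_one, ht]

theorem mask_lt (r j n : ℕ) : ((r >>> j) &&& 1) * ((1 <<< n) - 1) < 2 ^ n := by
  have h1 : (1 <<< n) - 1 = 2 ^ n - 1 := by rw [Nat.one_shiftLeft]
  rw [h1, Nat.and_one_is_mod]
  have h2 : (r >>> j) % 2 < 2 := Nat.mod_lt _ (by norm_num)
  have h3 : 0 < 2 ^ n := by positivity
  have h4 : (r >>> j) % 2 * (2 ^ n - 1) ≤ 1 * (2 ^ n - 1) := Nat.mul_le_mul_right _ (by omega)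
  omega

theorem slice_lt (j : ℕ) (rs : List ℕ) : ∀ w, slice j rs w < 2 ^ laneCount rs w := by
  induction rs with
  | nil => intro w; show 0 < 2 ^ 1; norm_num
  | cons r rs ih =>
    intro w
    cases w with
    | zero => exact ih 0
    | succ w =>
      rw [slice_cons_succ, laneCount_cons_succ]
      apply Nat.or_lt_two_pow
      · exact lt_of_lt_of_le (ih (w + 1)) (Nat.pow_le_pow_right (by norm_num) (by omega))
      · rw [Nat.shiftLeft_eq, Nat.add_comm (laneCount rs (w + 1)), pow_add]
        exact Nat.mul_lt_mul_of_pos_right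
          (Nat.xor_lt_two_pow (ih w) (mask_lt _ _ _)) (Nat.two_pow_pos _)

theorem slice_testBit_zero (j : ℕ) (rs : List ℕ) : ∀ w, (slice j rs w).testBit 0 = false := by
  induction rs with
  | nil => intro w; exact Nat.zero_testBit 0
  | cons r rs ih =>
    intro w
    cases w with
    | zero => exact ih 0
    | succ w =>
      rw [slice_cons_succ, Nat.testBit_or, ih (w + 1), Nat.testBit_shiftLeft]
      have := laneCount_pos rs (w + 1)
      simp
      omega

theorem exists_lane (rs : List ℕ) : ∀ (us : List Bool) (w : ℕ), us.length = rs.length →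
    (us.map Bool.toNat).sum ≤ w →
    ∃ t < laneCount rs w, ∀ j, (slice j rs w).testBit t = (comb rs us).testBit j := by
  induction rs with
  | nil =>
    intro us w hl _
    refine ⟨0, laneCount_pos _ _, fun j => ?_⟩
    rw [slice_testBit_zero]
    simp [comb]
  | cons r rs ih =>
    intro us w hl hw
    cases us with
    | nil => simp at hl
    | cons u us =>
      have hl' : us.length = rs.length := by simpa using hl
      cases u with
      | false =>
        have hw' : (us.map Bool.toNat).sum ≤ w := by simpa using hw
        obtain ⟨t, ht, h⟩ := ih us w hl' hw'
        cases w with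
        | zero =>
          refine ⟨t, ht, fun j => ?_⟩
          have h0 : slice j (r :: rs) 0 = slice j rs 0 := rfl
          rw [h0, h j]
          simp [comb]
        | succ w =>
          refine ⟨t, by rw [laneCount_cons_succ]; omega, fun j => ?_⟩
          rw [slice_cons_succ, Nat.testBit_or, h j, Nat.testBit_shiftLeft]
          have : ¬ (laneCount rs (w + 1) ≤ t) := by omega
          simp [comb, this]
      | true =>
        cases w with
        | zero => simp at hw
        | succ w =>
          have hw' : (us.map Bool.toNat).sum ≤ w := by
            simp at hw; omega
          obtain ⟨t, ht, h⟩ := ih us w hl' hw'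
          refine ⟨laneCount rs (w + 1) + t, by rw [laneCount_cons_succ]; omega, fun j => ?_⟩
          rw [slice_cons_succ, Nat.testBit_or, Nat.testBit_shiftLeft]
          have h1 : (slice j rs (w + 1)).testBit (laneCount rs (w + 1) + t) = false :=
            Nat.testBit_lt_two_pow (lt_of_lt_of_le (slice_lt j rs (w + 1))
              (Nat.pow_le_pow_right (by norm_num) (by omega)))
          rw [h1, Nat.add_sub_cancel_left, Nat.testBit_xor, h j, mask_testBit _ _ _ _ ht]
          simp [comb, Nat.testBit_xor, Bool.xor_comm]

theorem tally_succ (rs : List ℕ) (w n c0 c1 c2 c3 c4 s : ℕ) :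
    tally rs w (n + 1) c0 c1 c2 c3 c4 s =
      tally rs w n (c0 ^^^ slice n rs w) (c1 ^^^ (c0 &&& slice n rs w))
        (c2 ^^^ (c1 &&& (c0 &&& slice n rs w)))
        (c3 ^^^ (c2 &&& (c1 &&& (c0 &&& slice n rs w))))
        (c4 ^^^ (c3 &&& (c2 &&& (c1 &&& (c0 &&& slice n rs w)))))
        (s ||| (c4 &&& (c3 &&& (c2 &&& (c1 &&& (c0 &&& slice n rs w)))))) := rfl

theorem tally_spec (rs : List ℕ) (w t : ℕ) : ∀ n c0 c1 c2 c3 c4 s : ℕ,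
    (tally rs w n c0 c1 c2 c3 c4 s).testBit t = true →
    s.testBit t = true ∨
    32 ≤ (c0.testBit t).toNat + 2 * (c1.testBit t).toNat + 4 * (c2.testBit t).toNat
      + 8 * (c3.testBit t).toNat + 16 * (c4.testBit t).toNat
      + ∑ j ∈ Finset.range n, ((slice j rs w).testBit t).toNat := by
  intro n
  induction n with
  | zero => intro c0 c1 c2 c3 c4 s h; exact Or.inl h
  | succ n ih =>
    intro c0 c1 c2 c3 c4 s h
    rw [tally_succ] at h
    have := ih _ _ _ _ _ _ h
    rw [Finset.sum_range_succ]
    simp only [Nat.testBit_or, Nat.testBit_xor, Nat.testBit_and] at this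
    generalize ∑ j ∈ Finset.range n, ((slice j rs w).testBit t).toNat = S at *
    generalize (slice n rs w).testBit t = b at *
    generalize c0.testBit t = b0 at *
    generalize c1.testBit t = b1 at *
    generalize c2.testBit t = b2 at *
    generalize c3.testBit t = b3 at *
    generalize c4.testBit t = b4 at *
    generalize s.testBit t = b5 at *
    clear ih h
    cases b <;> cases b0 <;> cases b1 <;> cases b2 <;> cases b3 <;> cases b4 <;> cases b5 <;>
      simp at this ⊢ <;> omega

theorem checkCode_spec (rs : List ℕ) (w : ℕ) (h : checkCode rs w = true) (us : List Bool)
    (hl : us.length = rs.length) (hw : (us.map Bool.toNat).sum ≤ w) :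
    (∀ j, (comb rs us).testBit j = false) ∨
    27 ≤ ∑ j ∈ Finset.range 101, ((comb rs us).testBit j).toNat := by
  obtain ⟨t, ht, hj⟩ := exists_lane rs us w hl hw
  rcases Nat.eq_zero_or_pos t with rfl | hpos
  · left
    intro j
    rw [← hj j, slice_testBit_zero]
  · right
    have h1 : tally rs w 101 (allOnes rs w) 0 (allOnes rs w) 0 0 1 = allOnes rs w :=
      Nat.eq_of_beq_eq_true h
    have h2 : (allOnes rs w).testBit t = true := by
      show ((1 <<< laneCount rs w) - 1).testBit t = true
      rw [Nat.one_shiftLeft]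
      simp [Nat.testBit_two_pow_sub_one, ht]
    have h3 := tally_spec rs w t 101 (allOnes rs w) 0 (allOnes rs w) 0 0 1 (by rw [h1, h2])
    have h4 : Nat.testBit 1 t = false := by
      exact Nat.testBit_lt_two_pow (Nat.one_lt_two_pow (by omega))
    simp only [h4, h2, Nat.zero_testBit, hj] at h3
    simp at h3
    omega

/-- Booleans as elements of the field with two elements. -/
def bz (b : Bool) : ZMod 2 := bif b then 1 else 0

/-- Whether an element of the field with two elements is `1`. -/
def isOne (x : ZMod 2) : Bool := decide (x = 1)

theorem bz_xor (a b : Bool) : bz (a ^^ b) = bz a + bz b := by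
  cases a <;> cases b <;> decide

theorem bz_decide (x : ZMod 2) : bz (isOne x) = x := by
  revert x; decide

theorem decide_bz (b : Bool) : isOne (bz b) = b := by
  cases b <;> decide

theorem comb_ofFn (j : ℕ) : ∀ (n : ℕ) (g : Fin n → ℕ) (u : Fin n → Bool),
    bz ((comb (List.ofFn g) (List.ofFn u)).testBit j)
      = ∑ i, bz (u i) * bz ((g i).testBit j) := by
  intro n
  induction n with
  | zero => intro g u; simp [comb, bz]
  | succ n ih =>
    intro g u
    rw [List.ofFn_succ, List.ofFn_succ, Fin.sum_univ_succ, comb, Nat.testBit_xor, bz_xor, ih]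
    congr 1
    cases u 0 <;> simp [bz]

/-- Row `i` of a generator list. -/
def row (rs : List ℕ) (i : Fin 29) : ℕ := rs.getD i 0

/-- The encoder attached to a generator list. -/
def enc (rs : List ℕ) : (Fin 29 → ZMod 2) →ₗ[ZMod 2] (Fin 101 → ZMod 2) :=
  Matrix.vecMulLinear (Matrix.of fun i j => bz ((row rs i).testBit (j : ℕ)))

theorem enc_apply (rs : List ℕ) (m : Fin 29 → ZMod 2) (j : Fin 101) :
    enc rs m j = ∑ i, m i * bz ((row rs i).testBit (j : ℕ)) := rfl

/-- The window of 29 coordinates that starts at `o`. -/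
def win (o : ℕ) (ho : o + 29 ≤ 101) (t : Fin 29) : Fin 101 := ⟨o + t, by omega⟩

/-- Every row of `gs` is reproduced by `rs` from its bits in the window at `o`. -/
def agree (gs rs : List ℕ) (o : ℕ) : Prop :=
  ∀ i : Fin 29, comb rs (List.ofFn fun t : Fin 29 => (row gs i).testBit (o + t)) = row gs i

instance (gs rs : List ℕ) (o : ℕ) : Decidable (agree gs rs o) := by
  unfold agree; infer_instance

theorem enc_eq (gs rs : List ℕ) (o : ℕ) (ho : o + 29 ≤ 101) (hrs : rs = List.ofFn (row rs))
    (h : agree gs rs o) (m : Fin 29 → ZMod 2) :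
    enc gs m = enc rs (fun t => enc gs m (win o ho t)) := by
  funext j
  rw [enc_apply, enc_apply]
  simp only [enc_apply, Finset.sum_mul]
  rw [Finset.sum_comm]
  refine Finset.sum_congr rfl fun i _ => ?_
  have h1 := h i
  rw [hrs] at h1
  have h2 := comb_ofFn (j : ℕ) 29 (row rs) (fun t : Fin 29 => (row gs i).testBit (o + t))
  rw [h1] at h2
  rw [h2, Finset.mul_sum]
  refine Finset.sum_congr rfl fun t _ => ?_
  rw [mul_assoc]
  rfl

theorem norm_eq (v : Fin 101 → ZMod 2) :
    hammingNorm v = ∑ j, (isOne (v j)).toNat := by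
  unfold hammingNorm
  rw [Finset.card_filter]
  refine Finset.sum_congr rfl fun j _ => ?_
  have hx : ∀ x : ZMod 2, x = 0 ∨ x = 1 := by decide
  rcases hx (v j) with h | h <;> simp [h, isOne]

theorem window_bound (gs rs : List ℕ) (o : ℕ) (ho : o + 29 ≤ 101)
    (hrs : rs = List.ofFn (row rs)) (h : agree gs rs o) (hc : checkCode rs 8 = true)
    (m : Fin 29 → ZMod 2) (hne : enc gs m ≠ 0)
    (hw : ∑ t, (isOne (enc gs m (win o ho t))).toNat ≤ 8) :
    27 ≤ hammingNorm (enc gs m) := by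
  set v := enc gs m with hv
  let u : Fin 29 → Bool := fun t => isOne (v (win o ho t))
  have hbit : ∀ j : Fin 101, (comb rs (List.ofFn u)).testBit (j : ℕ) = isOne (v j) := by
    intro j
    have h1 : v j = bz ((comb rs (List.ofFn u)).testBit (j : ℕ)) := by
      have h2 := comb_ofFn (j : ℕ) 29 (row rs) u
      rw [← hrs] at h2
      have h3 := congrFun (enc_eq gs rs o ho hrs h m) j
      rw [enc_apply rs] at h3
      rw [h2, hv, h3]
      refine Finset.sum_congr rfl fun t _ => ?_
      have h4 : bz (u t) = enc gs m (win o ho t) := bz_decide _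
      rw [h4]
    rw [h1]
    generalize (comb rs (List.ofFn u)).testBit (j : ℕ) = b
    exact (decide_bz b).symm
  have hlen : (List.ofFn u).length = rs.length := by
    have h29 := congrArg List.length hrs
    rw [List.length_ofFn] at h29
    rw [List.length_ofFn, h29]
  have hsum : ((List.ofFn u).map Bool.toNat).sum ≤ 8 := by
    rw [List.map_ofFn, List.sum_ofFn]
    simpa only [Function.comp_apply] using hw
  rcases checkCode_spec rs 8 hc (List.ofFn u) hlen hsum with h0 | h1
  · exfalso
    apply hne
    funext j
    have h2 := hbit j
    rw [h0] at h2
    have h3 := bz_decide (v j)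
    rw [← h2] at h3
    exact h3.symm
  · rw [norm_eq]
    rw [← Fin.sum_univ_eq_sum_range (fun j => ((comb rs (List.ofFn u)).testBit j).toNat)] at h1
    simpa only [hbit] using h1

/-- Generator matrix, systematic in coordinates 0 to 28; rows in binary. -/
def gen0 : List ℕ := [
  1388816459964864916975326855169,
  1694102341511982090894071300098,
  547827353647620266829472071684,
  2445505745986181435418010976264,
  1072728897837673063675064221712,
  1621994278992240386850231943200,
  1451818451986143175886428438592,
  51351831375038776587375870080,
  158485952087497692461465075968,
  1666255169408804718505390768640,
  2260398292669441228724074710016,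
  111760369324428886824661813248,
  307941218066501921046718844928,
  15111872552650754222435868672,
  441044118708292932664685510656,
  504360802363986745972056162304,
  1499863241873748116921028509696,
  1907235081061425566755764436992,
  2312617312092888155659471945728,
  1944065339492706130376710946816,
  58445842147365202211546071040,
  1959047106121481714968502992896,
  1176202334820167542579857981440,
  2222446775118134897545960226816,
  1126738708355685719848156921856,
  505253594733530017239486431232,
  1799249474925676407818658250752,
  1123117285901021511059159121920,
  1865396769232368674869509881856]

/-- Generator matrix, systematic in coordinates 29 to 57; rows in binary. -/
def gen1 : List ℕ := [
  1059135727469721770764613790749,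
  2249409207504245671130193939999,
  897030419170856221136383004780,
  1705744271924271327417267349032,
  290439374215707064657861089396,
  211940626332087246720930724693,
  1393694423664918352235999713697,
  211198249692332117366661331712,
  2097088437287417890673916462512,
  942909889415060190561614020416,
  2185126745492997201624474346544,
  1359540379336822725726753417825,
  1707596959601879590221002717938,
  2485809829559344223872741974366,
  2379861293117241421100659250245,
  102359308898217758543170392457,
  2139469499152106116501413848478,
  1167033407847630360723600201553,
  189406967924951943214527490532,
  1459319791251471110213275816010,
  2031496300006905122699336624612,
  2055116837019830637202117508059,
  684926206653174580716914978733,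
  25108776237078005611240400790,
  1171230266042805232655334917055,
  2067059476673890568416857414208,
  2502644575746841451845721264379,
  1680786601120573827384023567365,
  2519601594964918133103047644316]

/-- Generator matrix, systematic in coordinates 58 to 86; rows in binary. -/
def gen2 : List ℕ := [
  2491199586557324333337017183946,
  738431233434492269488876486687,
  772010357000654996832642258817,
  666166483642927665119890264589,
  367977676682226095331746758973,
  1714237469409691317155728074882,
  15783735519389657436467460759,
  973485098430194413941799526259,
  1953778867076103600560926852865,
  1378600976396964111829933941168,
  1614583296533123588158005299812,
  813171863896132230504537399983,
  2289415361334163390939771140867,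
  1569089002155596507524546573271,
  1053022750639580128606123998393,
  1906891897459093038808328137431,
  1900702206707276084914989781139,
  1027335527880928239181642068309,
  1256663957937640815655339698653,
  309949388451987482994878358791,
  440397471207290684644675531496,
  1598490680190335862591197357322,
  906947030207377661490736972327,
  681643151983323625270922895954,
  558161050916170608247844158454,
  1905354134371937560691462740368,
  1143566454103255995564067547342,
  2020666314750065734969807723057,
  1700697500220999978296411324975]

theorem gen0_eq : gen0 = List.ofFn (row gen0) := by decide +kernel
theorem gen1_eq : gen1 = List.ofFn (row gen1) := by decide +kernel
theorem gen2_eq : gen2 = List.ofFn (row gen2) := by decide +kernel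

theorem agree0 : agree gen0 gen0 0 := by decide +kernel
theorem agree1 : agree gen0 gen1 29 := by decide +kernel
theorem agree2 : agree gen0 gen2 58 := by decide +kernel

theorem check0 : checkCode gen0 8 = true := by decide +kernel
theorem check1 : checkCode gen1 8 = true := by decide +kernel
theorem check2 : checkCode gen2 8 = true := by decide +kernel

theorem sys0 : ∀ i t : Fin 29, (row gen0 i).testBit (t : ℕ) = decide (i = t) := by decide +kernel

theorem enc_inj : Function.Injective (enc gen0) := by
  intro a b hab
  have key : ∀ (m : Fin 29 → ZMod 2) (t : Fin 29), enc gen0 m ⟨t, by omega⟩ = m t := by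
    intro m t
    rw [enc_apply]
    simp only [sys0]
    rw [Finset.sum_eq_single t]
    · simp [bz]
    · intro i _ hi
      simp [bz, hi]
    · simp
  funext t
  rw [← key a t, ← key b t, hab]

theorem windows_le (v : Fin 101 → ZMod 2) :
    ∑ t, (isOne (v (win 0 (by norm_num) t))).toNat
      + ∑ t, (isOne (v (win 29 (by norm_num) t))).toNat
      + ∑ t, (isOne (v (win 58 (by norm_num) t))).toNat ≤ hammingNorm v := by
  rw [norm_eq]
  let f : ℕ → ℕ := fun n => if h : n < 101 then (isOne (v ⟨n, h⟩)).toNat else 0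
  have h1 : ∑ j, (isOne (v j)).toNat = ∑ n ∈ Finset.range 101, f n := by
    rw [← Fin.sum_univ_eq_sum_range]
    refine Finset.sum_congr rfl fun j _ => ?_
    simp [f]
  have h2 : ∀ (o : ℕ) (ho : o + 29 ≤ 101),
      ∑ t, (isOne (v (win o ho t))).toNat = ∑ n ∈ Finset.range 29, f (o + n) := by
    intro o ho
    rw [← Fin.sum_univ_eq_sum_range (fun n => f (o + n))]
    refine Finset.sum_congr rfl fun t _ => ?_
    have : o + (t : ℕ) < 101 := by omega
    simp only [f, win, this, dif_pos]
  rw [h1, h2, h2, h2]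
  have h3 : Finset.range 101 = Finset.range (29 + 29 + 29 + 14) := rfl
  rw [h3, Finset.sum_range_add, Finset.sum_range_add, Finset.sum_range_add]
  simp only [Nat.zero_add, Nat.reduceAdd]
  omega

/-- there exists an `𝔽₂`-linear code of length 101, dimension 29
and minimum distance at least 27. -/
theorem stmt11 :
    ∃ C : Submodule (ZMod 2) (Fin 101 → ZMod 2),
      Module.finrank (ZMod 2) C = 29 ∧
      ∀ v ∈ C, v ≠ 0 → 27 ≤ hammingNorm v := by
  refine ⟨LinearMap.range (enc gen0), ?_, ?_⟩
  · rw [LinearMap.finrank_range_of_inj enc_inj]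
    simp
  · rintro v ⟨m, rfl⟩ hne
    by_contra hlt
    have hw := windows_le (enc gen0 m)
    by_cases a0 : ∑ t, (isOne (enc gen0 m (win 0 (by norm_num) t))).toNat ≤ 8
    · exact hlt (window_bound gen0 gen0 0 _ gen0_eq agree0 check0 m hne a0)
    by_cases a1 : ∑ t, (isOne (enc gen0 m (win 29 (by norm_num) t))).toNat ≤ 8
    · exact hlt (window_bound gen0 gen1 29 _ gen1_eq agree1 check1 m hne a1)
    by_cases a2 : ∑ t, (isOne (enc gen0 m (win 58 (by norm_num) t))).toNat ≤ 8
    · exact hlt (window_bound gen0 gen2 58 _ gen2_eq agree2 check2 m hne a2)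
    omega
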